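/- Let i >= j, i + j >= k, and fix q, n. Then P_q^n(i,j,k) <= M_q^n(i) * 2 * sum over c from ceil((i+j-k)/2) to j of Q_q^n(i,j,c). -/

import Mathlib

theorem aux_marsaglia {K : Type*} [Field K] {n : ℕ} (X Y : Matrix (Fin n) (Fin n) K) :
    X.rank + Y.rank ≤ (X - Y).rank +
      Module.finrank K ↥(LinearMap.range X.mulVecLin ⊓ LinearMap.range Y.mulVecLin) +
      Module.finrank K ↥(LinearMap.range X.transpose.mulVecLin ⊓
        LinearMap.range Y.transpose.mulVecLin) := by
  -- the stacked matrix
  have h1 := LinearMap.finrank_range_add_finrank_ker (Matrix.fromRows X Y).mulVecLin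
  have h2 := LinearMap.finrank_range_add_finrank_ker (X - Y).mulVecLin
  have h3 := Submodule.finrank_sup_add_finrank_inf_eq
    (LinearMap.range X.transpose.mulVecLin) (LinearMap.range Y.transpose.mulVecLin)
  have h4 : LinearMap.range X.transpose.mulVecLin ⊔ LinearMap.range Y.transpose.mulVecLin
      ≤ LinearMap.range (Matrix.fromRows X Y).transpose.mulVecLin := by
    rw [Matrix.transpose_fromRows]
    refine sup_le ?_ ?_
    · rintro _ ⟨v, rfl⟩
      exact ⟨Sum.elim v 0, by simp [Matrix.fromCols_mulVec, Matrix.mulVec_transpose]⟩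
    · rintro _ ⟨v, rfl⟩
      exact ⟨Sum.elim 0 v, by simp [Matrix.fromCols_mulVec, Matrix.mulVec_transpose]⟩
  have h5 := Submodule.finrank_mono h4
  have e1 := Matrix.rank_transpose X
  have e2 := Matrix.rank_transpose Y
  have e3 := Matrix.rank_transpose (Matrix.fromRows X Y)
  have h6 := LinearMap.finrank_range_add_finrank_ker
    (X.mulVecLin.domRestrict (LinearMap.ker (X - Y).mulVecLin))
  have h7 : LinearMap.range (X.mulVecLin.domRestrict (LinearMap.ker (X - Y).mulVecLin)) ≤
      LinearMap.range X.mulVecLin ⊓ LinearMap.range Y.mulVecLin := by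
    rintro _ ⟨⟨v, hv⟩, rfl⟩
    refine ⟨⟨v, rfl⟩, ⟨v, ?_⟩⟩
    simp only [LinearMap.mem_ker, Matrix.mulVecLin_apply, Matrix.sub_mulVec, sub_eq_zero] at hv
    simp [hv]
  have h8 := Submodule.finrank_mono h7
  have h9 : Module.finrank K
      (LinearMap.ker (X.mulVecLin.domRestrict (LinearMap.ker (X - Y).mulVecLin))) ≤
      Module.finrank K (LinearMap.ker (Matrix.fromRows X Y).mulVecLin) := by
    have hmap : (LinearMap.ker (X.mulVecLin.domRestrict
        (LinearMap.ker (X - Y).mulVecLin))).map (LinearMap.ker (X - Y).mulVecLin).subtype ≤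
        LinearMap.ker (Matrix.fromRows X Y).mulVecLin := by
      rintro _ ⟨⟨v, hv⟩, hv2, rfl⟩
      have hx : X.mulVec v = 0 := hv2
      simp only [LinearMap.mem_ker, Matrix.mulVecLin_apply, Matrix.sub_mulVec, hx,
        zero_sub, neg_eq_zero] at hv
      simp [Matrix.fromRows_mulVec, hx, hv]
    have := Submodule.finrank_mono hmap
    rwa [Submodule.finrank_map_subtype_eq] at this
  unfold Matrix.rank at *
  omega

theorem aux_equiv {K : Type*} [Field K] {n : ℕ} (A B : Matrix (Fin n) (Fin n) K)
    (h : A.rank = B.rank) : ∃ e : (Fin n → K) ≃ₗ[K] (Fin n → K),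
      (LinearMap.range A.mulVecLin).map (e : (Fin n → K) →ₗ[K] (Fin n → K)) =
        LinearMap.range B.mulVecLin := by
  obtain ⟨C, hC⟩ := Submodule.exists_isCompl (LinearMap.range A.mulVecLin)
  obtain ⟨D, hD⟩ := Submodule.exists_isCompl (LinearMap.range B.mulVecLin)
  have h1 := Submodule.finrank_add_eq_of_isCompl hC
  have h2 := Submodule.finrank_add_eq_of_isCompl hD
  unfold Matrix.rank at h
  let f := LinearEquiv.ofFinrankEq _ _ h
  let g : C ≃ₗ[K] D := LinearEquiv.ofFinrankEq _ _ (by omega)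
  let e := (Submodule.prodEquivOfIsCompl _ _ hC).symm ≪≫ₗ (f.prodCongr g) ≪≫ₗ
    (Submodule.prodEquivOfIsCompl _ _ hD)
  have he : ∀ x : LinearMap.range A.mulVecLin, e x = f x := by
    intro x
    simp [e]
  refine ⟨e, ?_⟩
  ext y
  constructor
  · rintro ⟨x, hx, rfl⟩
    have := he ⟨x, hx⟩
    simp only [LinearEquiv.coe_coe]
    rw [this]
    exact (f ⟨x, hx⟩).2
  · intro hy
    refine ⟨f.symm ⟨y, hy⟩, (f.symm ⟨y, hy⟩).2, ?_⟩
    simp only [LinearEquiv.coe_coe]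
    rw [he]
    simp

open Classical in
theorem aux_indep {K : Type*} [Field K] [Fintype K] {n : ℕ} (j c : ℕ)
    (A B : Matrix (Fin n) (Fin n) K) (h : A.rank = B.rank) :
    (Finset.univ.filter fun Y : Matrix (Fin n) (Fin n) K => Y.rank = j ∧ c ≤
      Module.finrank K ↥(LinearMap.range A.mulVecLin ⊓ LinearMap.range Y.mulVecLin)).card ≤
    (Finset.univ.filter fun Y : Matrix (Fin n) (Fin n) K => Y.rank = j ∧ c ≤
      Module.finrank K ↥(LinearMap.range B.mulVecLin ⊓ LinearMap.range Y.mulVecLin)).card := by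
  obtain ⟨e, he⟩ := aux_equiv A B h
  have hr : ∀ Y : Matrix (Fin n) (Fin n) K,
      LinearMap.range (LinearMap.toMatrix' (e : (Fin n → K) →ₗ[K] (Fin n → K)) * Y).mulVecLin =
      (LinearMap.range Y.mulVecLin).map (e : (Fin n → K) →ₗ[K] (Fin n → K)) := by
    intro Y
    rw [Matrix.mulVecLin_mul, LinearMap.range_comp]
    congr 1
    exact Matrix.toLin'_toMatrix' _
  apply Finset.card_le_card_of_injOn
    (fun Y => LinearMap.toMatrix' (e : (Fin n → K) →ₗ[K] (Fin n → K)) * Y)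
  · intro Y hY
    simp only [Finset.coe_filter, Finset.mem_univ, true_and, Set.mem_setOf_eq] at hY ⊢
    rw [hr, ← he, ← Submodule.map_inf _ e.injective]
    unfold Matrix.rank at *
    rw [hr]
    have := fun p : Submodule K (Fin n → K) => LinearEquiv.finrank_map_eq e p
    rw [this, this]
    exact hY
  · intro Y _ Z _ hYZ
    have := congrArg (fun M => LinearMap.toMatrix'
      (e.symm : (Fin n → K) →ₗ[K] (Fin n → K)) * M) hYZ
    simpa [← Matrix.mul_assoc, ← LinearMap.toMatrix'_comp] using this


/-- With `i ≥ j` and `i + j ≥ k`: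
`P_q^n(i,j,k) ≤ M_q^n(i) · 2 · ∑_{c = ⌈(i+j-k)/2⌉}^{j} Q_q^n(i,j,c)`, where
`P_q^n(i,j,k)` counts pairs `(X,Y)` with `rank X = i`, `rank Y = j`,
`rank (X - Y) ≤ k`; `M_q^n(i)` counts matrices of rank `i`; and `Q_q^n(i,j,c)`
counts matrices `Y` of rank `j` with `dim (col X₀ ⊓ col Y) = c` for a fixed matrix
`X₀` of rank `i` (this count is independent of the choice of `X₀`). -/
theorem P_le_M_mul_sum_Q {K : Type*} [Field K] [Fintype K] {n i j k : ℕ}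
    (hji : j ≤ i) (hk : k ≤ i + j)
    (X₀ : Matrix (Fin n) (Fin n) K) (hX₀ : X₀.rank = i) :
    Nat.card {P : Matrix (Fin n) (Fin n) K × Matrix (Fin n) (Fin n) K //
        P.1.rank = i ∧ P.2.rank = j ∧ (P.1 - P.2).rank ≤ k} ≤
      Nat.card {A : Matrix (Fin n) (Fin n) K // A.rank = i} *
        (2 * ∑ c ∈ Finset.Icc ((i + j - k + 1) / 2) j,
          Nat.card {Y : Matrix (Fin n) (Fin n) K // Y.rank = j ∧
            Module.finrank K
              ↥(LinearMap.range X₀.mulVecLin ⊓ LinearMap.range Y.mulVecLin) = c}) := by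
  classical
  set c0 := (i + j - k + 1) / 2 with hc0
  set S := (Finset.univ.filter fun Y : Matrix (Fin n) (Fin n) K => Y.rank = j ∧ c0 ≤
      Module.finrank K ↥(LinearMap.range X₀.mulVecLin ⊓ LinearMap.range Y.mulVecLin)) with hS
  have hsum : ∑ c ∈ Finset.Icc c0 j,
          Nat.card {Y : Matrix (Fin n) (Fin n) K // Y.rank = j ∧
            Module.finrank K
              ↥(LinearMap.range X₀.mulVecLin ⊓ LinearMap.range Y.mulVecLin) = c} = S.card := by
    rw [Finset.card_eq_sum_card_fiberwise (t := Finset.Icc c0 j) (f := fun Y =>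
      Module.finrank K ↥(LinearMap.range X₀.mulVecLin ⊓ LinearMap.range Y.mulVecLin))]
    · refine Finset.sum_congr rfl fun c hc => ?_
      rw [Nat.card_eq_fintype_card, Fintype.card_subtype]
      congr 1
      ext Y
      simp only [Finset.mem_Icc] at hc
      simp only [hS, Finset.mem_filter, Finset.mem_univ, true_and]
      constructor
      · rintro ⟨h1, h2⟩
        exact ⟨⟨h1, by omega⟩, h2⟩
      · rintro ⟨⟨h1, _⟩, h2⟩
        exact ⟨h1, h2⟩
    · intro Y hY
      simp only [hS, Finset.coe_filter, Finset.mem_univ, true_and, Set.mem_setOf_eq] at hY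
      simp only [Finset.coe_Icc, Set.mem_Icc]
      refine ⟨hY.2, ?_⟩
      rw [← hY.1]
      exact Submodule.finrank_mono inf_le_right
  rw [hsum, mul_comm, Nat.card_eq_fintype_card, Nat.card_eq_fintype_card, Fintype.card_subtype,
    Fintype.card_subtype]
  apply Finset.card_le_mul_card_image_of_maps_to (f := Prod.fst)
  · intro P hP
    simp only [Finset.mem_filter, Finset.mem_univ, true_and] at hP ⊢
    exact hP.1
  intro X hX
  simp only [Finset.mem_filter, Finset.mem_univ, true_and] at hX
  have b1 := aux_indep j c0 X X₀ (by rw [hX, hX₀])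
  have b2 := aux_indep j c0 X.transpose X₀ (by rw [Matrix.rank_transpose, hX, hX₀])
  rw [← hS] at b1 b2
  set S1 := (Finset.univ.filter fun Y : Matrix (Fin n) (Fin n) K => Y.rank = j ∧ c0 ≤
      Module.finrank K ↥(LinearMap.range X.mulVecLin ⊓ LinearMap.range Y.mulVecLin)) with hS1
  set S2 := (Finset.univ.filter fun Y : Matrix (Fin n) (Fin n) K => Y.rank = j ∧ c0 ≤
      Module.finrank K ↥(LinearMap.range X.transpose.mulVecLin ⊓
        LinearMap.range Y.mulVecLin)) with hS2
  calc _ ≤ (S1.image (fun Y => (X, Y)) ∪ S2.image (fun Y => (X, Y.transpose))).card := by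
        apply Finset.card_le_card
        rintro ⟨X', Y⟩ hP
        simp only [Finset.mem_filter, Finset.mem_univ, true_and] at hP
        obtain ⟨⟨h1, h2, h3⟩, rfl⟩ := hP
        have hm := aux_marsaglia X' Y
        rw [Finset.mem_union]
        by_cases hc : c0 ≤ Module.finrank K
            ↥(LinearMap.range X'.mulVecLin ⊓ LinearMap.range Y.mulVecLin)
        · left
          rw [Finset.mem_image]
          refine ⟨Y, ?_, rfl⟩
          rw [hS1, Finset.mem_filter]
          exact ⟨Finset.mem_univ _, h2, hc⟩
        · right
          rw [Finset.mem_image]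
          refine ⟨Y.transpose, ?_, by simp⟩
          rw [hS2, Finset.mem_filter]
          refine ⟨Finset.mem_univ _, by rw [Matrix.rank_transpose, h2], ?_⟩
          omega
    _ ≤ S1.card + S2.card := (Finset.card_union_le _ _).trans
        (Nat.add_le_add Finset.card_image_le Finset.card_image_le)
    _ ≤ 2 * S.card := by omega
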